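/- There exists a continuous map f : [0,1] → [0,1] that has a period-2^i point for every integer i ≥ 0 but has no periodic point of any period that is not a power of 2. -/

import Mathlib

/-- `x` is a periodic point of `f` with least period `m`. -/
def PeriodPt (f : ℝ → ℝ) (m : ℕ) (x : ℝ) : Prop :=
  f^[m] x = x ∧ ∀ i : ℕ, 0 < i → i < m → f^[i] x ≠ x

/-!
The *double* of `g : [0, 1] → [0, 1]` is the map `D g` which sends the left third onto a copy of
`g` inside the right third, `D g (y / 3) = (2 + g y) / 3`, translates the right third back onto the
left third, and is affine on the middle third. Its second iterate on the left third is conjugate to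
`g`, so an orbit that meets an outer third has twice the period of an orbit of `g`. On the middle
third `D g` has slope at most `-2`, so a periodic orbit that stays there is a fixed point.
Hence the periods of `D g` are `1` and the doubles of the periods of `g`. Since `D` is a contraction
of `C([0, 1], [0, 1])`, some continuous `F` equals its own double; the set of periods of `F` is then
`{1} ∪ 2 * (itself)`, that is, the set of powers of two.
-/

section

open Function Set
open scoped unitInterval

section General

variable {α β : Type*}

theorem minimalPeriod_eq_of_semiconj {φ : α → β} {f : α → α} {g : β → β}
    (h : Semiconj φ f g) (hφ : Injective φ) (x : α) :
    minimalPeriod g (φ x) = minimalPeriod f x :=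
  minimalPeriod_eq_minimalPeriod_iff.2 fun n =>
    ⟨fun hx => hφ (((h.iterate_right n).eq x).trans hx), fun hx => hx.map h⟩

theorem minimalPeriod_eq_two_mul_of_even {f : α → α} {x : α} (h : Even (minimalPeriod f x)) :
    minimalPeriod f x = 2 * minimalPeriod f^[2] x := by
  rw [minimalPeriod_iterate_eq_div_gcd two_ne_zero, Nat.gcd_eq_right h.two_dvd,
    Nat.mul_div_cancel' h.two_dvd]

theorem isFixedPt_of_expanding_on_orbit [MetricSpace α] {f : α → α} {s : Set α} {K : ℝ}
    (hK : 1 < K) (hf : ∀ x ∈ s, ∀ y ∈ s, K * dist x y ≤ dist (f x) (f y)) {x : α}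
    (hx : x ∈ periodicPts f) (hs : ∀ n, f^[n] x ∈ s) : IsFixedPt f x := by
  have growth (n : ℕ) : K ^ n * dist x (f x) ≤ dist (f^[n] x) (f^[n] (f x)) := by
    induction n with
    | zero => simp
    | succ n ih =>
      calc K ^ (n + 1) * dist x (f x) = K * (K ^ n * dist x (f x)) := by ring
        _ ≤ K * dist (f^[n] x) (f^[n] (f x)) := by gcongr
        _ ≤ dist (f^[n + 1] x) (f^[n + 1] (f x)) := by
          rw [iterate_succ_apply', iterate_succ_apply' f n (f x)]
          exact hf _ (hs n) _ (iterate_succ_apply f n x ▸ hs (n + 1))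
  obtain ⟨n, hn, hxn⟩ := hx
  have hle : K ^ n * dist x (f x) ≤ dist x (f x) := by
    simpa only [hxn.eq, hxn.apply.eq] using growth n
  have hKn : 1 < K ^ n := one_lt_pow₀ hK hn.ne'
  have hdist : dist x (f x) = 0 := by nlinarith [dist_nonneg (x := x) (y := f x)]
  exact (dist_eq_zero.1 hdist).symm

end General

local notation "clamp" => projIcc (0 : ℝ) 1 zero_le_one

/-- The double of `g`: it carries `[0, 1/3]` into `[2/3, 1]` by a rescaled copy of `g`, maps
`[1/3, 2/3]` affinely onto `[0, (2 + g 1) / 3]`, and translates `[2/3, 1]` onto `[0, 1/3]`.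
One formula covers all three thirds: the clamped factor `2 - 3 * x` is `1` on the left third and
`0` on the right third, and `x - 2 / 3` exceeds the product only on the right third. -/
noncomputable def doubleMap (g : I → I) (x : I) : I :=
  ⟨max (clamp (2 - 3 * x) * ((2 + g (clamp (3 * x))) / 3)) (x - 2 / 3), by
    set p := clamp (2 - 3 * x)
    set q := g (clamp (3 * x))
    have hq : (2 + q : ℝ) / 3 ∈ I := ⟨by linarith [q.2.1], by linarith [q.2.2]⟩
    have hpq := unitInterval.mul_mem p.2 hq
    exact ⟨le_max_of_le_left hpq.1, max_le hpq.2 (by linarith [x.2.2])⟩⟩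

theorem coe_doubleMap (g : I → I) (x : I) :
    (doubleMap g x : ℝ) =
      max ((clamp (2 - 3 * x) : ℝ) * ((2 + (g (clamp (3 * x)) : ℝ)) / 3)) ((x : ℝ) - 2 / 3) := rfl

/-- The embedding `y ↦ y / 3` of `[0, 1]` onto its left third, which conjugates `g` to the second
iterate of `doubleMap g`. -/
noncomputable def leftThird (y : I) : I :=
  ⟨y / 3, by linarith [y.2.1], by linarith [y.2.2]⟩

@[simp]
theorem coe_leftThird (y : I) : (leftThird y : ℝ) = y / 3 := rfl

theorem leftThird_injective : Injective leftThird := fun x y h => by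
  have h' : (x : ℝ) / 3 = y / 3 := congrArg Subtype.val h
  exact Subtype.ext (by linarith)

theorem exists_leftThird_eq {x : I} (hx : (x : ℝ) ≤ 1 / 3) : ∃ y, leftThird y = x :=
  ⟨⟨3 * x, by linarith [x.2.1], by linarith⟩, Subtype.ext (by simp)⟩

section Continuity

theorem continuous_doubleMap {g : I → I} (hg : Continuous g) : Continuous (doubleMap g) := by
  have _ : Continuous clamp := continuous_projIcc
  unfold doubleMap
  fun_prop

theorem dist_doubleMap_le (g h : I → I) (x : I) :
    dist (doubleMap g x) (doubleMap h x) ≤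
      1 / 3 * dist (g (clamp (3 * x))) (h (clamp (3 * x))) := by
  set p := clamp (2 - 3 * x)
  set y := clamp (3 * x)
  calc dist (doubleMap g x) (doubleMap h x)
    _ ≤ |(p : ℝ) * ((2 + g y) / 3) - p * ((2 + h y) / 3)| := abs_max_sub_max_le_abs _ _ _
    _ = p * (1 / 3 * |(g y : ℝ) - h y|) := by
      have hfactor : (p : ℝ) * ((2 + g y) / 3) - p * ((2 + h y) / 3) = p * ((g y - h y) / 3) := by
        ring
      rw [hfactor, abs_mul, abs_of_nonneg p.2.1, abs_div, abs_of_pos (zero_lt_three' ℝ)]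
      ring
    _ ≤ 1 / 3 * dist (g y) (h y) := mul_le_of_le_one_left (by positivity) p.2.2

theorem exists_continuous_isFixedPt_doubleMap :
    ∃ F : I → I, Continuous F ∧ IsFixedPt doubleMap F := by
  let D (g : C(I, I)) : C(I, I) := ⟨doubleMap g, continuous_doubleMap g.continuous⟩
  have hD : ContractingWith (1 / 3) D := by
    refine ⟨by rw [← NNReal.coe_lt_coe]; norm_num, LipschitzWith.of_dist_le_mul fun g h => ?_⟩
    refine (ContinuousMap.dist_le (by positivity)).2 fun x => (dist_doubleMap_le g h x).trans ?_
    push_cast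
    gcongr
    exact ContinuousMap.dist_apply_le_dist _
  let F := hD.fixedPoint
  exact ⟨F, F.continuous, congrArg DFunLike.coe (hD.fixedPoint_isFixedPt : D F = F)⟩

end Continuity

section Periods

variable (g : I → I)

theorem coe_doubleMap_leftThird (y : I) : (doubleMap g (leftThird y) : ℝ) = (2 + g y) / 3 := by
  have hp : clamp (2 - 3 * leftThird y) = 1 :=
    projIcc_of_right_le _ (by rw [coe_leftThird]; linarith [y.2.2])
  have hq : clamp (3 * leftThird y) = y := by
    rw [coe_leftThird, mul_div_cancel₀ _ three_ne_zero, projIcc_val]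
  rw [coe_doubleMap, hp, hq, Icc.coe_one, one_mul]
  exact max_eq_left (by rw [coe_leftThird]; linarith [y.2.2, (g y).2.1])

variable {g} in
theorem coe_doubleMap_of_mem_middle {x : I} (hx : (x : ℝ) ∈ Icc (1 / 3) (2 / 3)) :
    (doubleMap g x : ℝ) = (2 - 3 * x) * ((2 + g 1) / 3) := by
  have hp : (clamp (2 - 3 * x) : ℝ) = 2 - 3 * x := by
    rw [projIcc_of_mem _ ⟨by linarith [hx.2], by linarith [hx.1]⟩]
  have hq : clamp (3 * x) = 1 :=
    projIcc_of_right_le _ (by linarith [hx.1])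
  rw [coe_doubleMap, hp, hq]
  exact max_eq_left (by nlinarith [hx.2, (g 1).2.1])

variable {g} in
theorem coe_doubleMap_of_two_thirds_le {x : I} (hx : 2 / 3 ≤ (x : ℝ)) :
    (doubleMap g x : ℝ) = x - 2 / 3 := by
  have hp : clamp (2 - 3 * x) = 0 :=
    projIcc_of_le_left _ (by linarith)
  rw [coe_doubleMap, hp, Icc.coe_zero, zero_mul]
  exact max_eq_right (by linarith)

theorem semiconj_leftThird : Semiconj leftThird g (doubleMap g)^[2] := fun y => by
  have hy := coe_doubleMap_leftThird g y
  refine Subtype.ext ?_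
  rw [iterate_succ_apply, iterate_one, coe_doubleMap_of_two_thirds_le (by linarith [(g y).2.1]), hy,
    coe_leftThird]
  ring

theorem even_minimalPeriod_doubleMap_leftThird (y : I) :
    Even (minimalPeriod (doubleMap g) (leftThird y)) := by
  by_contra hodd
  obtain ⟨k, hk⟩ := Nat.not_even_iff_odd.1 hodd
  have hiter : (doubleMap g)^[2 * k] (leftThird y) = leftThird (g^[k] y) := by
    rw [iterate_mul, ((semiconj_leftThird g).iterate_right k).eq]
  have hreturn : doubleMap g (leftThird (g^[k] y)) = leftThird y := by
    calc doubleMap g (leftThird (g^[k] y))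
      _ = (doubleMap g)^[2 * k + 1] (leftThird y) := by rw [iterate_succ_apply', hiter]
      _ = leftThird y := by rw [← hk, iterate_minimalPeriod]
  have hcoe : (2 + g (g^[k] y) : ℝ) / 3 = y / 3 := by
    rw [← coe_doubleMap_leftThird, hreturn, coe_leftThird]
  linarith [y.2.2, (g (g^[k] y)).2.1]

theorem minimalPeriod_doubleMap_leftThird (y : I) :
    minimalPeriod (doubleMap g) (leftThird y) = 2 * minimalPeriod g y := by
  rw [minimalPeriod_eq_two_mul_of_even (even_minimalPeriod_doubleMap_leftThird g y),
    minimalPeriod_eq_of_semiconj (semiconj_leftThird g) leftThird_injective]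

theorem exists_isFixedPt_doubleMap : ∃ x, IsFixedPt (doubleMap g) x := by
  set c : ℝ := (2 + g 1) / 3 with hc
  have hc0 : 2 / 3 ≤ c := by linarith [(g 1).2.1]
  -- the solution of `(2 - 3 * x) * c = x`
  have hlo : 1 / 3 ≤ 2 * c / (1 + 3 * c) := by rw [le_div_iff₀ (by linarith)]; linarith
  have hhi : 2 * c / (1 + 3 * c) ≤ 2 / 3 := by rw [div_le_iff₀ (by linarith)]; linarith
  refine ⟨⟨2 * c / (1 + 3 * c), by linarith, by linarith⟩, Subtype.ext ?_⟩
  rw [coe_doubleMap_of_mem_middle ⟨hlo, hhi⟩, ← hc]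
  field_simp
  ring

variable {g}

theorem two_mul_dist_le_dist_doubleMap {x y : I} (hx : (x : ℝ) ∈ Icc (1 / 3) (2 / 3))
    (hy : (y : ℝ) ∈ Icc (1 / 3) (2 / 3)) :
    2 * dist x y ≤ dist (doubleMap g x) (doubleMap g y) := by
  have hslope : (2 : ℝ) ≤ 2 + g 1 := by linarith [(g 1).2.1]
  calc 2 * dist x y = 2 * |(y : ℝ) - x| := by rw [dist_comm, Subtype.dist_eq, Real.dist_eq]
    _ ≤ (2 + g 1) * |(y : ℝ) - x| := by gcongr
    _ = |(2 + g 1) * ((y : ℝ) - x)| := by rw [abs_mul, abs_of_nonneg (zero_le_two.trans hslope)]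
    _ = |(doubleMap g x : ℝ) - doubleMap g y| := by
      rw [coe_doubleMap_of_mem_middle hx, coe_doubleMap_of_mem_middle hy]
      ring_nf

theorem exists_iterate_doubleMap_eq_leftThird {x : I} {n : ℕ}
    (hn : ((doubleMap g)^[n] x : ℝ) ∉ Icc (1 / 3 : ℝ) (2 / 3)) :
    ∃ m y, (doubleMap g)^[m] x = leftThird y := by
  rcases le_or_gt ((doubleMap g)^[n] x : ℝ) (1 / 3) with hleft | hright
  · obtain ⟨y, hy⟩ := exists_leftThird_eq hleft
    exact ⟨n, y, hy.symm⟩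
  · have hval := coe_doubleMap_of_two_thirds_le (g := g) (not_le.1 fun h => hn ⟨hright.le, h⟩).le
    rw [← iterate_succ_apply' (doubleMap g)] at hval
    obtain ⟨y, hy⟩ := exists_leftThird_eq (x := (doubleMap g)^[n + 1] x)
      (by linarith [((doubleMap g)^[n] x).2.2])
    exact ⟨n + 1, y, hy.symm⟩

theorem minimalPeriod_doubleMap_eq_one_or_two_mul {x : I} (hx : x ∈ periodicPts (doubleMap g)) :
    minimalPeriod (doubleMap g) x = 1 ∨
      ∃ y, minimalPeriod (doubleMap g) x = 2 * minimalPeriod g y := by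
  by_cases hmid : ∀ n, ((doubleMap g)^[n] x : ℝ) ∈ Icc (1 / 3 : ℝ) (2 / 3)
  · exact Or.inl <| minimalPeriod_eq_one_iff_isFixedPt.2 <|
      isFixedPt_of_expanding_on_orbit (s := {z : I | (z : ℝ) ∈ Icc (1 / 3) (2 / 3)}) one_lt_two
        (fun _ hx _ hy => two_mul_dist_le_dist_doubleMap hx hy) hx hmid
  · obtain ⟨n, hn⟩ := not_forall.1 hmid
    obtain ⟨m, y, hy⟩ := exists_iterate_doubleMap_eq_leftThird hn
    exact Or.inr ⟨y, by
      rw [← minimalPeriod_doubleMap_leftThird, ← hy, minimalPeriod_apply_iterate hx]⟩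

end Periods

section SelfDouble

variable {F : I → I}

theorem exists_minimalPeriod_eq_two_pow (hF : IsFixedPt doubleMap F) (i : ℕ) :
    ∃ x, minimalPeriod F x = 2 ^ i := by
  induction i with
  | zero =>
    obtain ⟨x, hx⟩ := exists_isFixedPt_doubleMap F
    exact ⟨x, minimalPeriod_eq_one_iff_isFixedPt.2 (hF.eq ▸ hx)⟩
  | succ i ih =>
    obtain ⟨y, hy⟩ := ih
    have hdouble := minimalPeriod_doubleMap_leftThird F y
    rw [hF.eq, hy, ← pow_succ'] at hdouble
    exact ⟨leftThird y, hdouble⟩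

theorem minimalPeriod_eq_two_pow (hF : IsFixedPt doubleMap F) {x : I} (hx : x ∈ periodicPts F) :
    ∃ i, minimalPeriod F x = 2 ^ i := by
  induction hm : minimalPeriod F x using Nat.strong_induction_on generalizing x with
  | _ m ih =>
    have hm0 : 0 < m := hm ▸ minimalPeriod_pos_of_mem_periodicPts hx
    have hperiod := minimalPeriod_doubleMap_eq_one_or_two_mul (g := F) (hF.eq.symm ▸ hx)
    rw [hF.eq, hm] at hperiod
    obtain h1 | ⟨y, hy⟩ := hperiod
    · exact ⟨0, h1⟩
    · have hy0 : y ∈ periodicPts F := minimalPeriod_pos_iff_mem_periodicPts.1 (by lia)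
      obtain ⟨i, hi⟩ := ih (minimalPeriod F y) (by lia) hy0 rfl
      exact ⟨i + 1, by rw [hy, hi, pow_succ']⟩

end SelfDouble

theorem periodPt_iff_minimalPeriod_eq {f : ℝ → ℝ} {m : ℕ} (hm : 0 < m) {x : ℝ} :
    PeriodPt f m x ↔ minimalPeriod f x = m := by
  constructor
  · rintro ⟨hper, hmin⟩
    have hx : IsPeriodicPt f m x := hper
    refine (hx.minimalPeriod_le hm).antisymm (not_lt.1 fun hlt => ?_)
    exact hmin _ (hx.minimalPeriod_pos hm) hlt iterate_minimalPeriod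
  · rintro rfl
    exact ⟨iterate_minimalPeriod, fun i hi hlt =>
      not_isPeriodicPt_of_pos_of_lt_minimalPeriod hi.ne' hlt⟩

theorem periodPt_IccExtend_iff (F : I → I) {m : ℕ} (hm : 0 < m) (x : I) :
    PeriodPt (IccExtend zero_le_one fun y => (F y : ℝ)) m x ↔ minimalPeriod F x = m := by
  have hsemi : Semiconj Subtype.val F (IccExtend zero_le_one fun y => (F y : ℝ)) :=
    fun y => (IccExtend_val zero_le_one (fun z => (F z : ℝ)) y).symm
  rw [periodPt_iff_minimalPeriod_eq hm, minimalPeriod_eq_of_semiconj hsemi Subtype.val_injective]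

end

theorem sharkovsky_two_adic_tail :
    ∃ f : ℝ → ℝ, ContinuousOn f (Set.Icc 0 1) ∧
      Set.MapsTo f (Set.Icc 0 1) (Set.Icc 0 1) ∧
      (∀ i : ℕ, ∃ x ∈ Set.Icc (0:ℝ) 1, PeriodPt f (2 ^ i) x) ∧
      ∀ m : ℕ, 0 < m → (¬ ∃ i : ℕ, m = 2 ^ i) →
        ¬ ∃ x ∈ Set.Icc (0:ℝ) 1, PeriodPt f m x := by
  obtain ⟨F, hcont, hF⟩ := exists_continuous_isFixedPt_doubleMap
  refine ⟨Set.IccExtend zero_le_one fun y => (F y : ℝ),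
    (continuous_subtype_val.comp hcont).Icc_extend'.continuousOn, fun x _ => (F _).2,
    fun i => ?_, ?_⟩
  · obtain ⟨x, hx⟩ := exists_minimalPeriod_eq_two_pow hF i
    exact ⟨x, x.2, (periodPt_IccExtend_iff F (by positivity) x).2 hx⟩
  · rintro m hm hpow ⟨x, hxI, hx⟩
    have hxm := (periodPt_IccExtend_iff F hm ⟨x, hxI⟩).1 hx
    have hper := Function.minimalPeriod_pos_iff_mem_periodicPts.1 (hxm.symm ▸ hm)
    obtain ⟨i, hi⟩ := minimalPeriod_eq_two_pow hF hper
    exact hpow ⟨i, hxm.symm.trans hi⟩
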